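/- arXiv:math/0509720 — 2 statements merged into one kernel-verified Lean document; each statement's English description precedes it below -/
import Mathlib

section
/- Fix n ≥ 1 and a point w' = (x',y') ∈ ℝ^{n+1}×ℝ^n. The function (t,w) ↦ q^n_t(w, w'), defined for t > 0 and w = (x,y) ∈ ℝ^{n+1}×ℝ^n ≅ ℝ^{2n+1}, is smooth and satisfies the heat equation (1/2) Σ_{i=1}^{2n+1} ∂²q^n_t/∂w_i²(w, w') = ∂q^n_t/∂t(w, w') on (0,∞)×ℝ^{2n+1}. -/
open MeasureTheory Real

/-- The centered Gaussian density with variance `t`. -/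
noncomputable def gauss (t y : ℝ) : ℝ :=
  (Real.sqrt (2 * Real.pi * t))⁻¹ * Real.exp (-y ^ 2 / (2 * t))

/-- The Gaussian cumulative distribution function `Φ_t`. -/
noncomputable def gaussCDF (t y : ℝ) : ℝ := ∫ z in Set.Iic y, gauss t z

/-- The derivative `φ'_t` of the Gaussian density. -/
noncomputable def gaussDeriv (t y : ℝ) : ℝ :=
  -y / Real.sqrt (2 * Real.pi * t ^ 3) * Real.exp (-y ^ 2 / (2 * t))

/-- The kernel `q^n_t((x,y),(x',y'))`, a `(2n+1)×(2n+1)` block determinant. -/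
noncomputable def qKer (n : ℕ) (t : ℝ) (x x' : Fin (n + 1) → ℝ) (y y' : Fin n → ℝ) : ℝ :=
  Matrix.det (Matrix.fromBlocks
    (Matrix.of fun i j : Fin (n + 1) => gauss t (x' j - x i))
    (Matrix.of fun (i : Fin (n + 1)) (j : Fin n) =>
      gaussCDF t (y' j - x i) - (if (i : ℕ) ≤ (j : ℕ) then (1 : ℝ) else 0))
    (Matrix.of fun (i : Fin n) (j : Fin (n + 1)) => gaussDeriv t (x' j - y i))
    (Matrix.of fun i j : Fin n => gauss t (y' j - y i)))

/-! The kernel is a determinant whose `i`-th row depends on `w` only through `w i`. Since the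
determinant is multilinear in its rows, `∂/∂t` distributes over the rows by the Leibniz rule while
`∂²/∂wᵢ²` acts on row `i` alone, so it suffices that every entry solves the one-dimensional heat
equation. For `Φ_t(y) = Φ_1(y / √t)` this is the ordinary differential equation
`Φ_1''(z) = -z Φ_1'(z)`; the entries built from `φ_t` and `φ'_t` follow because spatial derivatives
of solutions are again solutions. -/

open scoped ContDiff Pointwise Topology

section Calculus

variable {E F : Type*} [NormedAddCommGroup E] [NormedSpace ℝ E]
  [NormedAddCommGroup F] [NormedSpace ℝ F]

lemma iteratedDeriv_continuousLinearMap_comp (L : E →L[ℝ] F) {f : ℝ → E} {k : ℕ} {x : ℝ}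
    (hf : ContDiffAt ℝ k f x) :
    iteratedDeriv k (fun a => L (f a)) x = L (iteratedDeriv k f x) := by
  have h := L.iteratedFDeriv_comp_left hf le_rfl
  simp only [iteratedDeriv_eq_iteratedFDeriv, ← Function.comp_def L f, h,
    ContinuousLinearMap.compContinuousMultilinearMap_coe, Function.comp_apply]

lemma hasDerivAt_fst_of_hasFDerivAt {g : ℝ × ℝ → E} {g' : ℝ × ℝ →L[ℝ] E} {t a : ℝ}
    (hg : HasFDerivAt g g' (t, a)) : HasDerivAt (fun s => g (s, a)) (g' (1, 0)) t :=
  hg.comp_hasDerivAt t ((hasDerivAt_id t).prodMk (hasDerivAt_const t a))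

lemma hasDerivAt_snd_of_hasFDerivAt {g : ℝ × ℝ → E} {g' : ℝ × ℝ →L[ℝ] E} {t a : ℝ}
    (hg : HasFDerivAt g g' (t, a)) : HasDerivAt (fun b => g (t, b)) (g' (0, 1)) a :=
  hg.comp_hasDerivAt a ((hasDerivAt_const a t).prodMk (hasDerivAt_id a))

lemma deriv_deriv_comm {f : ℝ → ℝ → E} {t a : ℝ}
    (hf : ContDiffAt ℝ 2 (fun p : ℝ × ℝ => f p.1 p.2) (t, a)) :
    deriv (fun s => deriv (f s) a) t = deriv (fun b => deriv (fun s => f s b) t) a := by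
  set g : ℝ × ℝ → E := fun p => f p.1 p.2
  have hdiff : ∀ᶠ p in 𝓝 (t, a), DifferentiableAt ℝ g p :=
    (hf.eventually (by simp)).mono fun p hp => hp.differentiableAt two_ne_zero
  have hfst : (fun s => deriv (f s) a) =ᶠ[𝓝 t] fun s => fderiv ℝ g (s, a) (0, 1) :=
    ((Continuous.prodMk_left a).tendsto t |>.eventually hdiff).mono fun s hs =>
      (hasDerivAt_snd_of_hasFDerivAt hs.hasFDerivAt).deriv
  have hsnd : (fun b => deriv (fun s => f s b) t) =ᶠ[𝓝 a] fun b => fderiv ℝ g (t, b) (1, 0) :=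
    ((Continuous.prodMk_right t).tendsto a |>.eventually hdiff).mono fun b hb =>
      (hasDerivAt_fst_of_hasFDerivAt hb.hasFDerivAt).deriv
  have hfderiv : HasFDerivAt (fderiv ℝ g) (fderiv ℝ (fderiv ℝ g) (t, a)) (t, a) :=
    ((hf.fderiv_right (m := 1) le_rfl).differentiableAt one_ne_zero).hasFDerivAt
  have hsymm : IsSymmSndFDerivAt ℝ g (t, a) := hf.isSymmSndFDerivAt (by simp)
  calc deriv (fun s => deriv (f s) a) t
      = fderiv ℝ (fderiv ℝ g) (t, a) (1, 0) (0, 1) := by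
        rw [hfst.deriv_eq]
        simpa using ((hasDerivAt_fst_of_hasFDerivAt hfderiv).clm_apply
          (hasDerivAt_const t ((0, 1) : ℝ × ℝ))).deriv
    _ = fderiv ℝ (fderiv ℝ g) (t, a) (0, 1) (1, 0) := hsymm _ _
    _ = deriv (fun b => deriv (fun s => f s b) t) a := by
        rw [hsnd.deriv_eq]
        simpa using ((hasDerivAt_snd_of_hasFDerivAt hfderiv).clm_apply
          (hasDerivAt_const a ((1, 0) : ℝ × ℝ))).deriv.symm

lemma hasDerivAt_setIntegral_Iic [CompleteSpace E] {f : ℝ → E} (hf : Integrable f) {y : ℝ}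
    (hy : ContinuousAt f y) : HasDerivAt (fun b => ∫ z in Set.Iic b, f z) (f y) y := by
  have hsplit : (fun b => ∫ z in Set.Iic b, f z) =
      fun b => (∫ z in Set.Iic y, f z) + ∫ z in y..b, f z := by
    funext b
    rw [← intervalIntegral.integral_Iic_sub_Iic hf.integrableOn hf.integrableOn,
      add_sub_cancel]
  rw [hsplit]
  exact (intervalIntegral.integral_hasDerivAt_right hf.intervalIntegrable
    hf.aestronglyMeasurable.stronglyMeasurableAtFilter hy).const_add _

end Calculus

/-- `u` is a smooth solution of the heat equation `½ ∂²u/∂a² = ∂u/∂t` on `(0, ∞) × ℝ`. Values of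
`u` at nonpositive times are unconstrained. -/
structure IsHeatSolution {E : Type*} [NormedAddCommGroup E] [NormedSpace ℝ E]
    (u : ℝ → ℝ → E) : Prop where
  contDiffOn : ContDiffOn ℝ ∞ (fun p : ℝ × ℝ => u p.1 p.2) {p | 0 < p.1}
  heat_eq : ∀ t, 0 < t → ∀ a,
    (1 / 2 : ℝ) • iteratedDeriv 2 (u t) a = deriv (fun s => u s a) t

/-- `u` is a smooth solution of the heat equation `½ ∑ᵢ ∂²u/∂wᵢ² = ∂u/∂t` on `(0, ∞) × ℝ^ι`. The
partial derivatives are taken along `Function.update w i`, so that no inner product structure on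
`ι → ℝ` is involved. -/
structure IsHeatSolutionPi {ι E : Type*} [Fintype ι] [DecidableEq ι] [NormedAddCommGroup E]
    [NormedSpace ℝ E] (u : ℝ → (ι → ℝ) → E) : Prop where
  contDiffOn : ContDiffOn ℝ ∞ (fun p : ℝ × (ι → ℝ) => u p.1 p.2) {p | 0 < p.1}
  heat_eq : ∀ t, 0 < t → ∀ w,
    (1 / 2 : ℝ) • ∑ i, iteratedDeriv 2 (fun a => u t (Function.update w i a)) (w i) =
      deriv (fun s => u s w) t

namespace IsHeatSolution

section Operations

variable {E : Type*} [NormedAddCommGroup E] [NormedSpace ℝ E] {u v : ℝ → ℝ → E} {t : ℝ}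

lemma contDiffAt (hu : IsHeatSolution u) (ht : 0 < t) (a : ℝ) :
    ContDiffAt ℝ ∞ (fun p : ℝ × ℝ => u p.1 p.2) (t, a) :=
  hu.contDiffOn.contDiffAt ((isOpen_lt continuous_const continuous_fst).mem_nhds ht)

lemma contDiff (hu : IsHeatSolution u) (ht : 0 < t) : ContDiff ℝ ∞ (u t) :=
  contDiff_iff_contDiffAt.2 fun a =>
    (hu.contDiffAt ht a).comp a (contDiffAt_const.prodMk contDiffAt_id)

lemma differentiableAt_time (hu : IsHeatSolution u) (ht : 0 < t) (a : ℝ) :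
    DifferentiableAt ℝ (fun s => u s a) t :=
  ((hu.contDiffAt ht a).comp t (contDiffAt_id.prodMk contDiffAt_const)).differentiableAt
    (by simp)

lemma congr (hu : IsHeatSolution u) (huv : ∀ t, 0 < t → v t = u t) : IsHeatSolution v where
  contDiffOn := hu.contDiffOn.congr fun p hp => congrFun (huv p.1 hp) p.2
  heat_eq t ht a := by
    have hnear : (fun s => v s a) =ᶠ[𝓝 t] fun s => u s a := by
      filter_upwards [lt_mem_nhds ht] with s hs using congrFun (huv s hs) a
    rw [hnear.deriv_eq, huv t ht, hu.heat_eq t ht a]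

lemma sub_const (hu : IsHeatSolution u) (c : E) : IsHeatSolution fun t a => u t a - c where
  contDiffOn := hu.contDiffOn.sub contDiffOn_const
  heat_eq t ht a := by
    simpa [iteratedDeriv_succ'] using hu.heat_eq t ht a

lemma comp_const_sub (hu : IsHeatSolution u) (c : ℝ) :
    IsHeatSolution fun t a => u t (c - a) where
  contDiffOn := hu.contDiffOn.comp (g := fun p : ℝ × ℝ => u p.1 p.2)
    (f := fun p : ℝ × ℝ => (p.1, c - p.2)) (by fun_prop) fun _ hp => hp
  heat_eq t ht a := by
    simpa [iteratedDeriv_comp_const_sub] using hu.heat_eq t ht (c - a)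

lemma spaceDeriv (hu : IsHeatSolution u) : IsHeatSolution fun t => deriv (u t) where
  contDiffOn := by
    have hfderiv := hu.contDiffOn.fderiv_of_isOpen (m := ∞)
      (isOpen_lt continuous_const continuous_fst) le_rfl
    refine (hfderiv.clm_apply (contDiffOn_const (c := ((0, 1) : ℝ × ℝ)))).congr fun p hp => ?_
    exact (hasDerivAt_snd_of_hasFDerivAt
      ((hu.contDiffAt hp p.2).differentiableAt (by simp)).hasFDerivAt).deriv
  heat_eq t ht a := by
    have hdiff : DifferentiableAt ℝ (iteratedDeriv 2 (u t)) a :=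
      (contDiff_infty.1 (hu.contDiff ht) 3).differentiable_iteratedDeriv' 2 a
    calc (1 / 2 : ℝ) • iteratedDeriv 2 (deriv (u t)) a
        = deriv (fun b => (1 / 2 : ℝ) • iteratedDeriv 2 (u t) b) a := by
          rw [← iteratedDeriv_succ', iteratedDeriv_succ, deriv_fun_const_smul _ hdiff]
      _ = deriv (fun b => deriv (fun s => u s b) t) a := by
          simp only [hu.heat_eq t ht]
      _ = deriv (fun s => deriv (u s) a) t :=
          (deriv_deriv_comm (contDiffAt_infty.1 (hu.contDiffAt ht a) 2)).symm

lemma comp_inv_sqrt_mul {g : ℝ → E} (hg : ContDiff ℝ ∞ g)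
    (hode : ∀ z, iteratedDeriv 2 g z = -z • deriv g z) :
    IsHeatSolution fun t a => g ((√t)⁻¹ * a) where
  contDiffOn := by
    refine hg.comp_contDiffOn (.mul (.inv (contDiffOn_fst.sqrt ?_) ?_) contDiffOn_snd)
    · exact fun p hp => ne_of_gt hp
    · exact fun p hp => (Real.sqrt_pos.2 hp).ne'
  heat_eq t ht a := by
    have hsqrt : √t ≠ 0 := (Real.sqrt_pos.2 ht).ne'
    have hscale : HasDerivAt (fun s => (√s)⁻¹ * a) (-(a / (2 * t * √t))) t := by
      refine (((Real.hasDerivAt_sqrt ht.ne').inv hsqrt).mul_const a).congr_deriv ?_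
      rw [Real.sq_sqrt ht.le]
      field_simp
    have htime : HasDerivAt (fun s => g ((√s)⁻¹ * a))
        (-(a / (2 * t * √t)) • deriv g ((√t)⁻¹ * a)) t :=
      (hg.differentiable (by simp) ((√t)⁻¹ * a)).hasDerivAt.scomp t hscale
    have hcoeff : (1 / 2 : ℝ) * ((√t)⁻¹ ^ 2 * -((√t)⁻¹ * a)) = -(a / (2 * t * √t)) := by
      rw [inv_pow, Real.sq_sqrt ht.le]
      field_simp
    simp only [iteratedDeriv_comp_const_smul (contDiff_infty.1 hg 2), hode, smul_smul, hcoeff,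
      htime.deriv]

end Operations

section Multilinear

variable {ι : Type*} [Fintype ι] {E : ι → Type*} [∀ i, NormedAddCommGroup (E i)]
  [∀ i, NormedSpace ℝ (E i)] {u : ∀ i, ℝ → ℝ → E i}

lemma pi (hu : ∀ i, IsHeatSolution (u i)) : IsHeatSolution fun t a i => u i t a where
  contDiffOn := contDiffOn_pi.2 fun i => (hu i).contDiffOn
  heat_eq t ht a := by
    have hsmooth : ContDiffAt ℝ 2 (fun a i => u i t a) a :=
      contDiffAt_pi.2 fun i => (contDiff_infty.1 ((hu i).contDiff ht) 2).contDiffAt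
    rw [deriv_pi fun i => (hu i).differentiableAt_time ht a]
    funext i
    rw [← (hu i).heat_eq t ht a, Pi.smul_apply]
    exact congrArg _ (iteratedDeriv_continuousLinearMap_comp (.proj i) hsmooth).symm

lemma continuousMultilinearMap_apply [DecidableEq ι] {F : Type*} [NormedAddCommGroup F]
    [NormedSpace ℝ F] (L : ContinuousMultilinearMap ℝ E F) (hu : ∀ i, IsHeatSolution (u i)) :
    IsHeatSolutionPi fun t (w : ι → ℝ) => L fun i => u i t (w i) where
  contDiffOn := L.contDiff.comp_contDiffOn <| contDiffOn_pi.2 fun i =>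
    (hu i).contDiffOn.comp (g := fun p : ℝ × ℝ => u i p.1 p.2)
      (f := fun p : ℝ × (ι → ℝ) => (p.1, p.2 i)) (by fun_prop) fun _ hp => hp
  heat_eq t ht w := by
    let slot (i : ι) : E i →L[ℝ] F := L.toContinuousLinearMap (fun j => u j t (w j)) i
    have htime : HasDerivAt (fun s => L fun i => u i s (w i))
        (∑ i, slot i (deriv (fun s => u i s (w i)) t)) t := by
      simpa [slot] using (HasFDerivAt.multilinear_comp (f := L) fun i =>
        ((hu i).differentiableAt_time ht (w i)).hasDerivAt.hasFDerivAt).hasDerivAt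
    have hspace (i : ι) :
        iteratedDeriv 2 (fun a => L fun k => u k t (Function.update w i a k)) (w i) =
          slot i (iteratedDeriv 2 (u i t) (w i)) := by
      have hslot (a : ℝ) :
          L (fun k => u k t (Function.update w i a k)) = slot i (u i t a) := by
        refine congrArg L (funext fun k => ?_)
        rcases eq_or_ne k i with rfl | hk
        · simp
        · simp [hk]
      simp only [hslot]
      exact iteratedDeriv_continuousLinearMap_comp _
        (contDiff_infty.1 ((hu i).contDiff ht) 2).contDiffAt
    rw [htime.deriv, Finset.smul_sum]
    refine Finset.sum_congr rfl fun i _ => ?_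
    rw [hspace, ← map_smul, (hu i).heat_eq t ht]

end Multilinear

end IsHeatSolution

lemma isHeatSolutionPi_det {ι : Type*} [Fintype ι] [DecidableEq ι] {u : ι → ι → ℝ → ℝ → ℝ}
    (hu : ∀ i j, IsHeatSolution (u i j)) :
    IsHeatSolutionPi fun t w => (Matrix.of fun i j => u i j t (w i)).det :=
  let det : ContinuousMultilinearMap ℝ (fun _ : ι => ι → ℝ) ℝ :=
    ⟨Matrix.detRowAlternating.toMultilinearMap, continuous_id.matrix_det⟩
  IsHeatSolution.continuousMultilinearMap_apply det fun i => .pi (hu i)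

lemma gauss_eq_gaussianPDFReal {t : ℝ} (ht : 0 ≤ t) :
    gauss t = ProbabilityTheory.gaussianPDFReal 0 t.toNNReal := by
  funext y
  simp [gauss, ProbabilityTheory.gaussianPDFReal, ht]

lemma hasDerivAt_gauss {t : ℝ} (ht : 0 < t) (y : ℝ) :
    HasDerivAt (gauss t) (gaussDeriv t y) y := by
  have hexponent : HasDerivAt (fun z : ℝ => -z ^ 2 / (2 * t)) (-y / t) y := by
    refine ((hasDerivAt_pow 2 y).neg.div_const (2 * t)).congr_deriv ?_
    field_simp
    simp
  have hsqrt : √(2 * π * t ^ 3) = t * √(2 * π * t) := by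
    rw [show 2 * π * t ^ 3 = t ^ 2 * (2 * π * t) by ring, Real.sqrt_mul (sq_nonneg t),
      Real.sqrt_sq ht.le]
  refine (hexponent.exp.const_mul (√(2 * π * t))⁻¹).congr_deriv ?_
  rw [gaussDeriv, hsqrt]
  field_simp

lemma hasDerivAt_gaussCDF {t : ℝ} (ht : 0 < t) (y : ℝ) :
    HasDerivAt (gaussCDF t) (gauss t y) y := by
  have hint : Integrable (gauss t) := by
    rw [gauss_eq_gaussianPDFReal ht.le]
    exact ProbabilityTheory.integrable_gaussianPDFReal 0 _
  exact hasDerivAt_setIntegral_Iic hint (hasDerivAt_gauss ht y).continuousAt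

lemma deriv_gauss {t : ℝ} (ht : 0 < t) : deriv (gauss t) = gaussDeriv t :=
  funext fun y => (hasDerivAt_gauss ht y).deriv

lemma deriv_gaussCDF {t : ℝ} (ht : 0 < t) : deriv (gaussCDF t) = gauss t :=
  funext fun y => (hasDerivAt_gaussCDF ht y).deriv

lemma gauss_eq_inv_sqrt_mul_gauss_one {t : ℝ} (ht : 0 < t) (y : ℝ) :
    gauss t y = (√t)⁻¹ * gauss 1 ((√t)⁻¹ * y) := by
  have hexponent : -((√t)⁻¹ * y) ^ 2 / (2 * 1) = -y ^ 2 / (2 * t) := by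
    rw [mul_pow, inv_pow, Real.sq_sqrt ht.le]
    field_simp
  rw [gauss, gauss, hexponent, mul_one, Real.sqrt_mul (by positivity) t, mul_inv]
  ring

lemma gaussCDF_eq_gaussCDF_one {t : ℝ} (ht : 0 < t) (y : ℝ) :
    gaussCDF t y = gaussCDF 1 ((√t)⁻¹ * y) := by
  have hc : 0 < (√t)⁻¹ := inv_pos.2 (Real.sqrt_pos.2 ht)
  calc gaussCDF t y
      = (√t)⁻¹ * ∫ z in Set.Iic y, gauss 1 ((√t)⁻¹ • z) := by
        simp only [gaussCDF, gauss_eq_inv_sqrt_mul_gauss_one ht, integral_const_mul, smul_eq_mul]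
    _ = ∫ z in (√t)⁻¹ • Set.Iic y, gauss 1 z := by
        rw [Measure.setIntegral_comp_smul_of_pos _ _ _ hc, Module.finrank_self, pow_one,
          smul_eq_mul, mul_inv_cancel_left₀ hc.ne']
    _ = gaussCDF 1 ((√t)⁻¹ * y) := by
        rw [LinearOrderedField.smul_Iic hc, gaussCDF]

lemma contDiff_gaussCDF {t : ℝ} (ht : 0 < t) : ContDiff ℝ ∞ (gaussCDF t) := by
  rw [contDiff_infty_iff_deriv, deriv_gaussCDF ht]
  refine ⟨fun y => (hasDerivAt_gaussCDF ht y).differentiableAt, ?_⟩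
  unfold gauss
  fun_prop

lemma iteratedDeriv_two_gaussCDF_one (z : ℝ) :
    iteratedDeriv 2 (gaussCDF 1) z = -z • deriv (gaussCDF 1) z := by
  rw [iteratedDeriv_succ', iteratedDeriv_one, deriv_gaussCDF one_pos, deriv_gauss one_pos]
  simp only [gaussDeriv, gauss, one_pow, smul_eq_mul]
  ring

lemma isHeatSolution_gaussCDF : IsHeatSolution gaussCDF :=
  .congr (.comp_inv_sqrt_mul (contDiff_gaussCDF one_pos) iteratedDeriv_two_gaussCDF_one)
    fun _ ht => funext (gaussCDF_eq_gaussCDF_one ht)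

lemma isHeatSolution_gauss : IsHeatSolution gauss :=
  isHeatSolution_gaussCDF.spaceDeriv.congr fun _ ht => (deriv_gaussCDF ht).symm

lemma isHeatSolution_gaussDeriv : IsHeatSolution gaussDeriv :=
  isHeatSolution_gauss.spaceDeriv.congr fun _ ht => (deriv_gauss ht).symm

/-- The entries of the matrix defining `qKer n t x x' y y'`, for fixed `x'` and `y'`, as functions
of `t` and of the coordinate of `w = (x, y)` indexing the row. -/
noncomputable def qKerEntry {n : ℕ} (x' : Fin (n + 1) → ℝ) (y' : Fin n → ℝ) :
    Matrix (Fin (n + 1) ⊕ Fin n) (Fin (n + 1) ⊕ Fin n) (ℝ → ℝ → ℝ) :=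
  Matrix.fromBlocks
    (Matrix.of fun _ j t a => gauss t (x' j - a))
    (Matrix.of fun i j t a => gaussCDF t (y' j - a) - (if (i : ℕ) ≤ (j : ℕ) then (1 : ℝ) else 0))
    (Matrix.of fun _ j t a => gaussDeriv t (x' j - a))
    (Matrix.of fun _ j t a => gauss t (y' j - a))

lemma isHeatSolution_qKerEntry {n : ℕ} (x' : Fin (n + 1) → ℝ) (y' : Fin n → ℝ)
    (i j : Fin (n + 1) ⊕ Fin n) : IsHeatSolution (qKerEntry x' y' i j) := by
  rcases i with i | i <;> rcases j with j | j
  · exact isHeatSolution_gauss.comp_const_sub _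
  · exact (isHeatSolution_gaussCDF.comp_const_sub _).sub_const _
  · exact isHeatSolution_gaussDeriv.comp_const_sub _
  · exact isHeatSolution_gauss.comp_const_sub _

lemma qKer_eq_det_qKerEntry {n : ℕ} (x' : Fin (n + 1) → ℝ) (y' : Fin n → ℝ) (t : ℝ)
    (w : Fin (n + 1) ⊕ Fin n → ℝ) :
    qKer n t (w ∘ Sum.inl) x' (w ∘ Sum.inr) y' =
      (Matrix.of fun i j => qKerEntry x' y' i j t (w i)).det := by
  rw [qKer]
  congr 1
  ext (i | i) (j | j) <;> rfl

/-- For fixed `w' = (x',y')`, the map `(t,w) ↦ q^n_t(w,w')` is smooth on `(0,∞) × ℝ^{2n+1}`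
and satisfies the heat equation
`(1/2) Σ_i ∂²q/∂w_i² = ∂q/∂t`. -/
theorem stmt0 (n : ℕ) (hn : 1 ≤ n) (x' : Fin (n + 1) → ℝ) (y' : Fin n → ℝ) :
    ContDiffOn ℝ (⊤ : ℕ∞)
      (fun p : ℝ × ((Fin (n + 1) ⊕ Fin n) → ℝ) =>
        qKer n p.1 (p.2 ∘ Sum.inl) x' (p.2 ∘ Sum.inr) y')
      {p : ℝ × ((Fin (n + 1) ⊕ Fin n) → ℝ) | 0 < p.1} ∧
    ∀ (t : ℝ), 0 < t → ∀ w : (Fin (n + 1) ⊕ Fin n) → ℝ,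
      (1 / 2 : ℝ) * ∑ i : Fin (n + 1) ⊕ Fin n,
          iteratedDeriv 2
            (fun a => qKer n t (Function.update w i a ∘ Sum.inl) x'
              (Function.update w i a ∘ Sum.inr) y') (w i)
        = deriv (fun s => qKer n s (w ∘ Sum.inl) x' (w ∘ Sum.inr) y') t := by
  simp only [qKer_eq_det_qKerEntry]
  have hdet := isHeatSolutionPi_det (isHeatSolution_qKerEntry x' y')
  exact ⟨hdet.contDiffOn, hdet.heat_eq⟩
end

section
/- For every n ≥ 1 and every x ∈ W^{n+1}, the integral of the Vandermonde product over the interlacing region equals ∫_{W^n(x)} h_n(y) dy = h_{n+1}(x)/n!. In particular λ^n(x,·) = n! h_n(·)/h_{n+1}(x) is a probability density on W^n(x) whenever h_{n+1}(x) ≠ 0. -/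
/-!
The Vandermonde determinant `h_{n+1}(x)` has a column of ones, so subtracting from each row its
predecessor leaves the `n × n` determinant with entries
`x_{i+1} ^ j - x_i ^ j = j ∫ t in x_i..x_{i+1}, t ^ (j - 1)`, `1 ≤ i, j ≤ n`. The factors `j`
come out of the columns as `n!`. Row `i` of the determinant `h_n(y)` involves only the coordinate
`y_i`, which ranges over `[x_i, x_{i+1}]` independently of the others, so the determinant of the
one-dimensional integrals is the integral of the determinant.
-/

open MeasureTheory

/-- The Vandermonde product `h_m(z) = ∏_{i<j} (z_j − z_i)`. -/
noncomputable def vand (m : ℕ) (z : Fin m → ℝ) : ℝ :=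
  ∏ j : Fin m, ∏ i ∈ Finset.Iio j, (z j - z i)

/-- The interlacing region `W^n(x) = {y : x_1 ≤ y_1 ≤ x_2 ≤ … ≤ y_n ≤ x_{n+1}}`. -/
def WintAt (n : ℕ) (x : Fin (n + 1) → ℝ) : Set (Fin n → ℝ) :=
  {y | ∀ i : Fin n, x i.castSucc ≤ y i ∧ y i ≤ x i.succ}

lemma det_eq_det_sub_castSucc_of_forall_zero_eq_one {R : Type*} [CommRing R] {n : ℕ}
    {M : Matrix (Fin (n + 1)) (Fin (n + 1)) R} (hM : ∀ i, M i 0 = 1) :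
    M.det = (Matrix.of fun i j : Fin n => M i.succ j.succ - M i.castSucc j.succ).det := by
  let N : Matrix (Fin (n + 1)) (Fin (n + 1)) R :=
    Matrix.of (Fin.cons (M 0) fun i => M i.succ - M i.castSucc)
  have hN_zero : N 0 0 = 1 := hM 0
  have hN_succ (i : Fin n) : N i.succ 0 = 0 := by simp [N, hM]
  calc
    M.det = N.det :=
      Matrix.det_eq_of_forall_row_eq_smul_add_pred (fun _ => 1) (fun _ => rfl) (by simp [N])
    _ = (N.submatrix Fin.succ Fin.succ).det := by
      simp [Matrix.det_succ_column_zero, Fin.sum_univ_succ, hN_zero, hN_succ]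
    _ = _ := rfl

lemma det_vandermonde_eq_det_pow_succ_sub_pow_succ {R : Type*} [CommRing R] {n : ℕ}
    (x : Fin (n + 1) → R) :
    (Matrix.vandermonde x).det =
      (Matrix.of fun i j : Fin n =>
        x i.succ ^ (j + 1 : ℕ) - x i.castSucc ^ (j + 1 : ℕ)).det := by
  simpa only [Matrix.vandermonde_apply, Fin.val_succ] using
    det_eq_det_sub_castSucc_of_forall_zero_eq_one (M := Matrix.vandermonde x) (by simp)

lemma det_div_val_add_one {K : Type*} [Field K] {n : ℕ} (A : Matrix (Fin n) (Fin n) K) :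
    (Matrix.of fun i j => A i j / ((j : ℕ) + 1)).det = A.det / n.factorial := by
  have prod_eq_factorial : ∏ j : Fin n, ((j : ℕ) + 1 : K) = n.factorial := by
    rw [Fin.prod_univ_eq_prod_range (fun k => (k + 1 : K)),
      ← Finset.prod_range_add_one_eq_factorial]
    push_cast
    rfl
  simp only [div_eq_inv_mul, Matrix.det_mul_row, Finset.prod_inv_distrib, prod_eq_factorial]

lemma integral_pi_det_eq_det_integral {ι 𝕜 : Type*} [Fintype ι] [DecidableEq ι] [RCLike 𝕜]
    {E : ι → Type*} [∀ i, MeasurableSpace (E i)] {μ : ∀ i, Measure (E i)} [∀ i, SigmaFinite (μ i)]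
    {f : ∀ i, ι → E i → 𝕜} (hf : ∀ i j, Integrable (f i j) (μ i)) :
    ∫ y, (Matrix.of fun i j => f i j (y i)).det ∂Measure.pi μ =
      (Matrix.of fun i j => ∫ t, f i j t ∂μ i).det := by
  have det_expand (A : Matrix ι ι 𝕜) :
      A.det = ∑ σ : Equiv.Perm ι, (σ.sign : 𝕜) * ∏ i, A i (σ i) := by
    rw [← A.det_transpose, Matrix.det_apply']
    rfl
  have integrable_term (σ : Equiv.Perm ι) :
      Integrable (fun y => (σ.sign : 𝕜) * ∏ i, f i (σ i) (y i)) (Measure.pi μ) :=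
    (Integrable.fintype_prod_dep fun i => hf i (σ i)).const_mul _
  simp only [det_expand, Matrix.of_apply]
  rw [integral_finsetSum _ fun σ _ => integrable_term σ]
  refine Finset.sum_congr rfl fun σ _ => ?_
  rw [integral_const_mul, integral_fintype_prod_eq_prod fun i => f i (σ i)]

lemma setIntegral_Icc_pow {a b : ℝ} (hab : a ≤ b) (k : ℕ) :
    ∫ t in Set.Icc a b, t ^ k = (b ^ (k + 1) - a ^ (k + 1)) / (k + 1) := by
  rw [integral_Icc_eq_integral_Ioc, ← intervalIntegral.integral_of_le hab, integral_pow]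

lemma setIntegral_Icc_det_vandermonde {n : ℕ} {a b : Fin n → ℝ} (hab : a ≤ b) :
    ∫ y in Set.Icc a b, (Matrix.vandermonde y).det =
      (Matrix.of fun i j : Fin n => b i ^ (j + 1 : ℕ) - a i ^ (j + 1 : ℕ)).det / n.factorial := by
  have integrable_pow (i j : Fin n) :
      IntegrableOn (fun t : ℝ => t ^ (j : ℕ)) (Set.Icc (a i) (b i)) :=
    (continuous_pow _).integrableOn_Icc
  calc
    ∫ y in Set.Icc a b, (Matrix.vandermonde y).det =
        ∫ y, (Matrix.of fun i j : Fin n => y i ^ (j : ℕ)).det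
          ∂Measure.pi fun i => volume.restrict (Set.Icc (a i) (b i)) := by
      rw [← Set.pi_univ_Icc, volume_pi, Measure.restrict_pi_pi]
      rfl
    _ = (Matrix.of fun i j : Fin n => ∫ t in Set.Icc (a i) (b i), t ^ (j : ℕ)).det :=
      integral_pi_det_eq_det_integral integrable_pow
    _ = _ := by
      simp only [setIntegral_Icc_pow (hab _)]
      exact det_div_val_add_one (Matrix.of fun i j => b i ^ (j + 1 : ℕ) - a i ^ (j + 1 : ℕ))

lemma vand_eq_det_vandermonde (m : ℕ) (z : Fin m → ℝ) : vand m z = (Matrix.vandermonde z).det := by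
  rw [Matrix.det_vandermonde, vand]
  exact Finset.prod_comm' (by simp)

lemma wintAt_eq_Icc (n : ℕ) (x : Fin (n + 1) → ℝ) :
    WintAt n x = Set.Icc (fun i => x i.castSucc) (fun i => x i.succ) := by
  ext y
  exact forall_and

lemma setIntegral_wintAt_vand (n : ℕ) {x : Fin (n + 1) → ℝ} (hx : Monotone x) :
    ∫ y in WintAt n x, vand n y = vand (n + 1) x / n.factorial := by
  simp only [vand_eq_det_vandermonde]
  rw [wintAt_eq_Icc, setIntegral_Icc_det_vandermonde fun i => hx i.castSucc_le_succ,
    det_vandermonde_eq_det_pow_succ_sub_pow_succ]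

/-- `∫_{W^n(x)} h_n(y) dy = h_{n+1}(x)/n!`; in particular `λ^n(x,·) = n! h_n(·)/h_{n+1}(x)`
is a probability density on `W^n(x)` whenever `h_{n+1}(x) ≠ 0`. -/
theorem stmt7 (n : ℕ) (hn : 1 ≤ n) (x : Fin (n + 1) → ℝ) (hx : Monotone x) :
    (∫ y in WintAt n x, vand n y) = vand (n + 1) x / (Nat.factorial n : ℝ) ∧
    (vand (n + 1) x ≠ 0 →
      (∫ y in WintAt n x, (Nat.factorial n : ℝ) * vand n y / vand (n + 1) x) = 1) := by
  refine ⟨setIntegral_wintAt_vand n hx, fun h => ?_⟩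
  have factorial_ne_zero : (n.factorial : ℝ) ≠ 0 := by positivity
  rw [integral_div, integral_const_mul, setIntegral_wintAt_vand n hx,
    mul_div_cancel₀ _ factorial_ne_zero, div_self h]
end
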